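/- Let X be a Lévy process such that S = e^X is a martingale and E[e^{qX_T}] < ∞ for some q ∈ (1,∞). For η ∈ [0,1] define Φ(η)_t := e^{ηX_t} · sup_{s∈[0,t]} e^{(1−η)(X_t − X_s)}. Then Φ(η) ∈ SM_q(P) with ‖Φ(η)‖_{SM_q(P)} ≤ 2^{(1−η)/q} · (q/(q−1))² · ‖e^{X_T}‖_{L_q(P)}. -/

import Mathlib

open MeasureTheory

/-- The set of admissible constants `c` in the definition of the weighted
`SM_q(P)` class: `E[sup_{t∈[a,T]} Φ_t^q | F_a] ≤ c^q Φ_a^q` a.s. for all `a ∈ [0,T]`. -/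
noncomputable def smSet {Ω : Type*} [MeasurableSpace Ω] (P : Measure Ω)
    (ℱ : ℝ → MeasurableSpace Ω) (T q : ℝ) (Φ : ℝ → Ω → ℝ) : Set ℝ :=
  {c : ℝ | 0 ≤ c ∧ ∀ a ∈ Set.Icc (0 : ℝ) T,
    ∀ᵐ ω ∂P, (P[(fun ω' => ⨆ t : Set.Icc a T, Φ t.1 ω' ^ q) | ℱ a]) ω
      ≤ c ^ q * Φ a ω ^ q}

open ProbabilityTheory Filter Real
open scoped ENNReal Topology

/-!
For `0 ≤ a ≤ t ≤ T` one has `Φ(η)_t ≤ D Φ(η)_a`, where `D` is the supremum of the ratios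
`exp (X t - X s)` over `a ≤ s ≤ t ≤ T`: for `s ≤ a` this is the ratio from `a` to `t`, and for
`a ≤ s` it is convexity of `exp` applied to the ratios from `a` and from `s` to `t`. Being a
function of the increments after `a`, `D` is independent of `F_a`, so only `E[D ^ q]` matters.

Along a grid, `D` is the running maximum of the drawups `max_{i ≤ k} exp (X k - X i)`. These form a
submartingale in `k`, so Doob's inequality reduces the problem to the drawup at the last time `n`.
That drawup is itself the running maximum of `k ↦ exp (X n - X (n - k))`, which is a martingale
because the increments are independent, and Doob's inequality applies a second time.
Right-continuity of the paths and Fatou's lemma remove the grid.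
-/

/-! ### Doob's maximal inequality -/

section Doob

variable {Ω : Type*} {m0 : MeasurableSpace Ω} {μ : Measure Ω} {ℱ : Filtration ℕ m0}
  {f : ℕ → Ω → ℝ} {q : ℝ}

lemma rpow_sub_one_mul_self {a : ℝ} (hq : q ≠ 0) (ha : 0 ≤ a) :
    a ^ (q - 1) * a = a ^ q := by
  simpa using (rpow_add_one' ha (by simpa using hq : q - 1 + 1 ≠ 0)).symm

lemma rpow_sub_one_mul_le {a b : ℝ} (hq : 1 < q) (ha : 0 ≤ a) (hb : 0 ≤ b) :
    a ^ (q - 1) * b ≤ (1 - 1 / q) * a ^ q + 1 / q * b ^ q := by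
  have hq0 : 0 < q := by linarith
  have amgm := geom_mean_le_arith_mean2_weighted (sub_nonneg.2 ((div_le_one hq0).2 hq.le))
    (by positivity : 0 ≤ 1 / q) (rpow_nonneg ha q) (rpow_nonneg hb q) (by ring)
  have exponent_left : q * (1 - 1 / q) = q - 1 := by field_simp
  have exponent_right : q * (1 / q) = 1 := by field_simp
  rwa [← rpow_mul ha, ← rpow_mul hb, exponent_left, exponent_right, rpow_one] at amgm

-- The increment of `V k = M k ^ (q - 1) * x k - (1 - 1 / q) * M k ^ q`, where `M = partialSups x`,
-- dominates a predictable weight times an increment of `x`, so `V` is a submartingale if `x` is.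
lemma partialSups_rpow_mul_sub_le {x : ℕ → ℝ} (hq : 1 < q) (hx : ∀ k, 0 ≤ x k) (k : ℕ) :
    partialSups x k ^ (q - 1) * (x (k + 1) - x k) ≤
      (partialSups x (k + 1) ^ (q - 1) * x (k + 1) - (1 - 1 / q) * partialSups x (k + 1) ^ q) -
        (partialSups x k ^ (q - 1) * x k - (1 - 1 / q) * partialSups x k ^ q) := by
  rw [partialSups_add_one]
  rcases le_total (partialSups x k) (x (k + 1)) with hlt | hge
  · rw [sup_eq_right.2 hlt, rpow_sub_one_mul_self (by linarith) (hx _)]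
    linarith [rpow_sub_one_mul_le hq ((hx k).trans (le_partialSups x k)) (hx (k + 1))]
  · rw [sup_eq_left.2 hge]
    linarith

lemma integral_mul_le_of_submartingale {i j : ℕ} {g : Ω → ℝ} [IsFiniteMeasure μ]
    (hf : Submartingale f ℱ μ) (hij : i ≤ j) (hg : StronglyMeasurable[ℱ i] g) (hg0 : 0 ≤ g)
    (hgi : Integrable (g * f i) μ) (hgj : Integrable (g * f j) μ) :
    ∫ ω, (g * f i) ω ∂μ ≤ ∫ ω, (g * f j) ω ∂μ := by
  have pull_out : μ[g * f j | ℱ i] =ᵐ[μ] g * μ[f j | ℱ i] :=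
    condExp_mul_of_stronglyMeasurable_left hg hgj (hf.integrable j)
  rw [← integral_condExp (ℱ.le i) (f := g * f j)]
  refine integral_mono_ae hgi integrable_condExp ?_
  filter_upwards [pull_out, hf.ae_le_condExp hij] with ω hω hle
  rw [hω]
  exact mul_le_mul_of_nonneg_left hle (hg0 ω)

lemma measurable_partialSups {_ : MeasurableSpace Ω} {n : ℕ}
    (hf : ∀ i ≤ n, Measurable (f i)) : Measurable (partialSups f n) := by
  rw [partialSups_apply]
  exact Finset.measurable_sup' _ fun i hi => hf i (Finset.mem_Iic.1 hi)

lemma memLp_partialSups {p : ℝ≥0∞} {n : ℕ} (hf : ∀ i ≤ n, MemLp (f i) p μ) :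
    MemLp (partialSups f n) p μ := by
  rw [partialSups_apply]
  exact Finset.sup'_induction (p := fun g => MemLp g p μ) _ _ (fun _ h _ h' => h.sup h')
    fun i hi => hf i (Finset.mem_Iic.1 hi)

lemma integrable_rpow_of_memLp {g : Ω → ℝ} (hq : 0 < q) (hg : MemLp g (.ofReal q) μ)
    (hg0 : 0 ≤ g) : Integrable (fun ω => g ω ^ q) μ := by
  have := hg.integrable_norm_rpow (by simpa using hq) ENNReal.ofReal_ne_top
  simpa only [ENNReal.toReal_ofReal hq.le, norm_of_nonneg (hg0 _)] using this

lemma integrable_rpow_sub_one_mul {g h : Ω → ℝ} (hq : 1 < q) (hg : MemLp g (.ofReal q) μ)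
    (hg0 : 0 ≤ g) (hh : MemLp h (.ofReal q) μ) (hh0 : 0 ≤ h) :
    Integrable (fun ω => g ω ^ (q - 1) * h ω) μ := by
  have hq0 : 0 < q := by linarith
  refine (((integrable_rpow_of_memLp hq0 hg hg0).const_mul (1 - 1 / q)).add
    ((integrable_rpow_of_memLp hq0 hh hh0).const_mul (1 / q))).mono'
    ((hg.aestronglyMeasurable.aemeasurable.pow_const _).aestronglyMeasurable.mul
      hh.aestronglyMeasurable) (.of_forall fun ω => ?_)
  rw [norm_of_nonneg (mul_nonneg (rpow_nonneg (hg0 ω) _) (hh0 ω))]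
  exact rpow_sub_one_mul_le hq (hg0 ω) (hh0 ω)

lemma integral_partialSups_rpow_le_integral_mul [IsFiniteMeasure μ] (hq : 1 < q)
    (hf : Submartingale f ℱ μ) (hf0 : 0 ≤ f) (hfq : ∀ k, MemLp (f k) (.ofReal q) μ) (n : ℕ) :
    (1 - 1 / q) * ∫ ω, partialSups f n ω ^ q ∂μ ≤
      ∫ ω, partialSups f n ω ^ (q - 1) * f n ω ∂μ := by
  have hq0 : 0 < q := by linarith
  have sup_nonneg (k) : 0 ≤ partialSups f k := (hf0 k).trans (le_partialSups f k)
  have sup_memLp (k) : MemLp (partialSups f k) (.ofReal q) μ := memLp_partialSups fun i _ => hfq i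
  have int_pow (k) := (integrable_rpow_of_memLp hq0 (sup_memLp k) (sup_nonneg k)).const_mul
    (1 - 1 / q)
  have int_mul (k l) : Integrable (fun ω => partialSups f k ω ^ (q - 1) * f l ω) μ :=
    integrable_rpow_sub_one_mul hq (sup_memLp k) (sup_nonneg k) (hfq l) (hf0 l)
  set V : ℕ → Ω → ℝ := fun k ω =>
    partialSups f k ω ^ (q - 1) * f k ω - (1 - 1 / q) * partialSups f k ω ^ q with hV
  have int_V (k) : Integrable (V k) μ := (int_mul k k).sub (int_pow k)
  suffices 0 ≤ ∫ ω, V n ω ∂μ by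
    rwa [hV, integral_sub (int_mul n n) (int_pow n), integral_const_mul, sub_nonneg] at this
  induction n with
  | zero =>
    refine integral_nonneg fun ω => ?_
    simp only [hV, partialSups_zero, Pi.zero_apply, rpow_sub_one_mul_self hq0.ne' (hf0 0 ω)]
    linarith [mul_nonneg (one_div_pos.2 hq0).le (rpow_nonneg (hf0 0 ω) q)]
  | succ k ih =>
    have weight_meas : StronglyMeasurable[ℱ k] fun ω => partialSups f k ω ^ (q - 1) :=
      ((measurable_partialSups fun i hi => (hf.stronglyMeasurable i).measurable.mono
        (ℱ.mono hi) le_rfl).pow_const _).stronglyMeasurable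
    have drift : ∫ ω, partialSups f k ω ^ (q - 1) * f k ω ∂μ ≤
        ∫ ω, partialSups f k ω ^ (q - 1) * f (k + 1) ω ∂μ :=
      integral_mul_le_of_submartingale hf k.le_succ weight_meas
        (fun ω => rpow_nonneg (sup_nonneg k ω) _) (int_mul k k) (int_mul k (k + 1))
    have step := integral_mono ((int_mul k (k + 1)).sub (int_mul k k))
      ((int_V (k + 1)).sub (int_V k)) fun ω => by
        simpa only [hV, Pi.sub_apply, mul_sub, Pi.partialSups_apply] using
          partialSups_rpow_mul_sub_le hq (fun i => hf0 i ω) k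
    rw [integral_sub' (int_mul k (k + 1)) (int_mul k k),
      integral_sub' (int_V (k + 1)) (int_V k)] at step
    linarith

theorem integral_partialSups_rpow_le [IsFiniteMeasure μ] (hq : 1 < q)
    (hf : Submartingale f ℱ μ) (hf0 : 0 ≤ f) (hfq : ∀ k, MemLp (f k) (.ofReal q) μ) (n : ℕ) :
    ∫ ω, partialSups f n ω ^ q ∂μ ≤ (q / (q - 1)) ^ q * ∫ ω, f n ω ^ q ∂μ := by
  have hq0 : 0 < q := by linarith
  have hq1 : 0 < q - 1 := by linarith
  set c := q / (q - 1) with hc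
  have hc0 : 0 ≤ c := by positivity
  have sup_nonneg : 0 ≤ partialSups f n := (hf0 n).trans (le_partialSups f n)
  have sup_memLp : MemLp (partialSups f n) (.ofReal q) μ := memLp_partialSups fun i _ => hfq i
  have int_sup := (integrable_rpow_of_memLp hq0 sup_memLp sup_nonneg).const_mul (1 - 1 / q)
  have int_f := ((integrable_rpow_of_memLp hq0 (hfq n) (hf0 n)).const_mul (c ^ q)).const_mul (1 / q)
  have int_mul := (integrable_rpow_sub_one_mul hq sup_memLp sup_nonneg (hfq n) (hf0 n)).const_mul c
  have young := integral_mono int_mul (int_sup.add int_f) fun ω => by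
    have := rpow_sub_one_mul_le hq (sup_nonneg ω) (mul_nonneg hc0 (hf0 n ω))
    rw [mul_rpow hc0 (hf0 n ω)] at this
    simpa only [Pi.add_apply, mul_left_comm] using this
  simp only [Pi.add_apply] at young
  rw [integral_add int_sup int_f] at young
  simp only [integral_const_mul] at young
  have doob := mul_le_mul_of_nonneg_left
    (integral_partialSups_rpow_le_integral_mul hq hf hf0 hfq n) hc0
  rw [← mul_assoc, show c * (1 - 1 / q) = 1 by rw [hc]; field_simp, one_mul] at doob
  refine le_of_mul_le_mul_left ?_ (one_div_pos.2 hq0)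
  linarith

lemma submartingale_of_mul_le [IsFiniteMeasure μ] {Y : ℕ → Ω → ℝ} (hf : StronglyAdapted ℱ f)
    (hfi : ∀ k, Integrable (f k) μ) (hYm : ∀ k, Measurable (Y k))
    (hYi : ∀ k, Integrable (Y k) μ) (hY : ∀ k, ∫ ω, Y k ω ∂μ = 1)
    (hindep : ∀ k, Indep (MeasurableSpace.comap (Y k) inferInstance) (ℱ k) μ)
    (hstep : ∀ k, f k * Y k ≤ f (k + 1)) : Submartingale f ℱ μ := by
  refine submartingale_nat hf hfi fun k => ?_
  have indep_fun : IndepFun (f k) (Y k) μ := (IndepFun_iff_Indep _ _ _).2 <|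
    indep_of_indep_of_le_left (hindep k).symm (hf k).measurable.comap_le
  have int_mul : Integrable (f k * Y k) μ := indep_fun.integrable_mul (hfi k) (hYi k)
  have condExp_Y : μ[Y k | ℱ k] =ᵐ[μ] fun _ => 1 := by
    rw [← hY k]
    exact condExp_indep_eq (hYm k).comap_le (ℱ.le k) (comap_measurable _).stronglyMeasurable
      (hindep k)
  filter_upwards [condExp_mul_of_stronglyMeasurable_left (hf k) int_mul (hYi k), condExp_Y,
    condExp_mono int_mul (hfi (k + 1)) (.of_forall (hstep k))] with ω pull_out one mono
  rwa [pull_out, Pi.mul_apply, one, mul_one] at mono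

end Doob

/-! ### Drawups of a geometric walk -/

section GeometricWalk

variable {Ω : Type*} {m0 : MeasurableSpace Ω} {P : Measure Ω} {ℱ : Filtration ℕ m0}
  {X : ℕ → Ω → ℝ} {q : ℝ} {m n : ℕ}

lemma indep_sup_left_of_indep_sup_right {m₁ m₂ m₃ : MeasurableSpace Ω}
    [IsZeroOrProbabilityMeasure P] (h₁ : m₁ ≤ m0) (h₂ : m₂ ≤ m0) (h₃ : m₃ ≤ m0)
    (h₂₁ : Indep m₂ m₁ P) (h₃₁₂ : Indep m₃ (m₁ ⊔ m₂) P) : Indep (m₃ ⊔ m₂) m₁ P := by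
  have generated : m₃ ⊔ m₂ = MeasurableSpace.generateFrom
      (Set.image2 (· ∩ ·) {s | MeasurableSet[m₃] s} {s | MeasurableSet[m₂] s}) := by
    refine le_antisymm (sup_le (fun s hs => ?_) fun s hs => ?_)
      (MeasurableSpace.generateFrom_le ?_)
    · exact MeasurableSpace.measurableSet_generateFrom ⟨s, hs, Set.univ, .univ, Set.inter_univ s⟩
    · exact MeasurableSpace.measurableSet_generateFrom ⟨Set.univ, .univ, s, hs, Set.univ_inter s⟩
    · rintro _ ⟨s, hs, t, ht, rfl⟩
      exact ((le_sup_left : m₃ ≤ m₃ ⊔ m₂) s hs).inter ((le_sup_right : m₂ ≤ m₃ ⊔ m₂) t ht)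
  refine IndepSets.indep (sup_le h₃ h₂) h₁ ?_ (@MeasurableSpace.isPiSystem_measurableSet _ m₁)
    generated (@MeasurableSpace.generateFrom_measurableSet _ m₁).symm ?_
  · rintro _ ⟨s, hs, t, ht, rfl⟩ _ ⟨s', hs', t', ht', rfl⟩ -
    exact ⟨s ∩ s', hs.inter hs', t ∩ t', ht.inter ht', Set.inter_inter_inter_comm ..⟩
  · rw [IndepSets_iff]
    rintro _ A ⟨s, hs, t, ht, rfl⟩ hA
    rw [Indep_iff] at h₂₁ h₃₁₂
    have hA' : MeasurableSet[m₁ ⊔ m₂] A := (le_sup_left : m₁ ≤ m₁ ⊔ m₂) A hA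
    have ht' : MeasurableSet[m₁ ⊔ m₂] t := (le_sup_right : m₂ ≤ m₁ ⊔ m₂) t ht
    calc P (s ∩ t ∩ A) = P s * (P t * P A) := by
          rw [Set.inter_assoc, h₃₁₂ s (t ∩ A) hs (ht'.inter hA'), h₂₁ t A ht hA]
      _ = P (s ∩ t) * P A := by rw [h₃₁₂ s t hs ht', mul_assoc]

/-- The σ-algebra generated by the increments `X (j + 1) - X j` for `m ≤ j < n`. -/
abbrev incrementSigma (X : ℕ → Ω → ℝ) (m n : ℕ) : MeasurableSpace Ω :=
  ⨆ j ∈ Set.Ico m n, MeasurableSpace.comap (fun ω => X (j + 1) ω - X j ω) inferInstance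

lemma incrementSigma_le (hX : ∀ k, Measurable (X k)) (m n : ℕ) : incrementSigma X m n ≤ m0 :=
  iSup₂_le fun j _ => ((hX (j + 1)).sub (hX j)).comap_le

lemma incrementSigma_anti_left (X : ℕ → Ω → ℝ) (n : ℕ) : Antitone (incrementSigma X · n) :=
  fun _ _ h => biSup_mono fun _ hj => ⟨h.trans hj.1, hj.2⟩

lemma incrementSigma_succ (h : m ≤ n) : incrementSigma X m (n + 1) =
    MeasurableSpace.comap (fun ω => X (n + 1) ω - X n ω) inferInstance ⊔ incrementSigma X m n := by
  rw [incrementSigma, ← Set.insert_Ico_right_eq_Ico_add_one h, iSup_insert, incrementSigma]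

lemma measurable_sub_incrementSigma {i j : ℕ} (hi : m ≤ i) (hij : i ≤ j) (hj : j ≤ n) :
    Measurable[incrementSigma X m n] fun ω => X j ω - X i ω := by
  induction j, hij using Nat.le_induction with
  | base => simp only [sub_self, measurable_const]
  | succ j hij ih =>
    have last : Measurable[incrementSigma X m n] fun ω => X (j + 1) ω - X j ω :=
      (comap_measurable _).mono (le_iSup₂_of_le j ⟨hi.trans hij, hj⟩ le_rfl) le_rfl
    simpa only [Pi.add_def, sub_add_sub_cancel] using last.add (ih (j.le_succ.trans hj))

/-- `IsGeometricWalk q X ℱ P`: the partial sums `X` have independent increments relative to `ℱ`,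
the multiplicative increments of `exp X` have mean one, and all its ratios lie in `L^q`. -/
structure IsGeometricWalk (q : ℝ) (X : ℕ → Ω → ℝ) (ℱ : Filtration ℕ m0) (P : Measure Ω) :
    Prop where
  measurable : ∀ k, Measurable[ℱ k] (X k)
  indep_succ : ∀ k,
    Indep (MeasurableSpace.comap (fun ω => X (k + 1) ω - X k ω) inferInstance) (ℱ k) P
  integral_exp_sub : ∀ i j, i ≤ j → ∫ ω, exp (X j ω - X i ω) ∂P = 1
  memLp_exp_sub : ∀ i j, i ≤ j → MemLp (fun ω => exp (X j ω - X i ω)) (.ofReal q) P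

/-- The increments of a walk up to time `n`, revealed backwards from `n`. -/
def reversedFiltration (X : ℕ → Ω → ℝ) (hX : ∀ k, Measurable (X k)) (n : ℕ) : Filtration ℕ m0 where
  seq k := incrementSigma X (n - k) n
  mono' _ _ h := incrementSigma_anti_left X n (Nat.sub_le_sub_left h n)
  le' _ := incrementSigma_le hX _ n

/-- `drawup X k` is the largest ratio `exp (X k - X i)` with `i ≤ k`. -/
noncomputable def drawup (X : ℕ → Ω → ℝ) (k : ℕ) : Ω → ℝ :=
  partialSups (fun i ω => exp (X k ω - X i ω)) k

lemma exp_sub_le_drawup (X : ℕ → Ω → ℝ) {i k : ℕ} (h : i ≤ k) (ω : Ω) :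
    exp (X k ω - X i ω) ≤ drawup X k ω :=
  le_partialSups_of_le (fun i ω => exp (X k ω - X i ω)) h ω

lemma drawup_nonneg (X : ℕ → Ω → ℝ) : 0 ≤ drawup X :=
  fun k ω => (exp_pos _).le.trans (exp_sub_le_drawup X k.zero_le ω)

lemma drawup_mul_exp_sub_le (X : ℕ → Ω → ℝ) (k : ℕ) :
    (drawup X k * fun ω => exp (X (k + 1) ω - X k ω)) ≤ drawup X (k + 1) := by
  intro ω
  obtain ⟨i, hi, attained⟩ := exists_partialSups_eq (fun i => exp (X k ω - X i ω)) k
  rw [Pi.mul_apply, drawup, Pi.partialSups_apply, attained, ← exp_add, sub_add_sub_cancel']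
  exact exp_sub_le_drawup X (hi.trans k.le_succ) ω

lemma measurable_drawup {_ : MeasurableSpace Ω} {k : ℕ}
    (hX : ∀ i ≤ k, Measurable fun ω => X k ω - X i ω) : Measurable (drawup X k) :=
  measurable_partialSups fun i hi => (hX i hi).exp

lemma partialSups_comp_sub {α : Type*} [SemilatticeSup α] (u : ℕ → α) (n : ℕ) :
    partialSups (fun i => u (n - i)) n = partialSups u n := by
  refine le_antisymm (partialSups_le _ _ _ fun i _ => le_partialSups_of_le u (n.sub_le i))
    (partialSups_le _ _ _ fun i hi => ?_)
  simpa only [Nat.sub_sub_self hi] using le_partialSups_of_le (fun i => u (n - i)) (n.sub_le i)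

namespace IsGeometricWalk

lemma measurable' (h : IsGeometricWalk q X ℱ P) (k : ℕ) : Measurable (X k) :=
  (h.measurable k).mono (ℱ.le k) le_rfl

lemma measurable_sub (h : IsGeometricWalk q X ℱ P) {i j k : ℕ} (hi : i ≤ k) (hj : j ≤ k) :
    Measurable[ℱ k] fun ω => X j ω - X i ω :=
  ((h.measurable j).mono (ℱ.mono hj) le_rfl).sub ((h.measurable i).mono (ℱ.mono hi) le_rfl)

lemma memLp_drawup (h : IsGeometricWalk q X ℱ P) (k : ℕ) :
    MemLp (drawup X k) (.ofReal q) P :=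
  memLp_partialSups fun i hi => h.memLp_exp_sub i k hi

variable [IsProbabilityMeasure P]

lemma integrable_exp_sub (h : IsGeometricWalk q X ℱ P) (hq : 1 ≤ q) {i j : ℕ} (hij : i ≤ j) :
    Integrable (fun ω => exp (X j ω - X i ω)) P :=
  (h.memLp_exp_sub i j hij).integrable (ENNReal.one_le_ofReal.2 hq)

lemma indep_incrementSigma (h : IsGeometricWalk q X ℱ P) (hmn : m ≤ n) :
    Indep (incrementSigma X m n) (ℱ m) P := by
  induction n, hmn using Nat.le_induction with
  | base =>
    simpa only [incrementSigma, Set.Ico_self, Set.mem_empty_iff_false, iSup_false, iSup_bot]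
      using indep_bot_left (ℱ m)
  | succ n hmn ih =>
    have past_le : ℱ m ⊔ incrementSigma X m n ≤ ℱ n :=
      sup_le (ℱ.mono hmn) (iSup₂_le fun j hj => (h.measurable_sub hj.2.le hj.2).comap_le)
    rw [incrementSigma_succ hmn]
    exact indep_sup_left_of_indep_sup_right (ℱ.le m) (incrementSigma_le h.measurable' m n)
      ((h.measurable' _).sub (h.measurable' _)).comap_le ih
      (indep_of_indep_of_le_right (h.indep_succ n) past_le)

lemma submartingale_exp_sub_reversed (h : IsGeometricWalk q X ℱ P) (hq : 1 ≤ q) (n : ℕ) :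
    Submartingale (fun k ω => exp (X n ω - X (n - k) ω))
      (reversedFiltration X h.measurable' n) P := by
  have pred_le (k) : n - (k + 1) ≤ n - k := Nat.sub_le_sub_left k.le_succ n
  refine submartingale_of_mul_le (Y := fun k ω => exp (X (n - k) ω - X (n - (k + 1)) ω))
    (fun k => (measurable_sub_incrementSigma le_rfl (n.sub_le k) le_rfl).exp.stronglyMeasurable)
    (fun k => h.integrable_exp_sub hq (n.sub_le k))
    (fun k => ((h.measurable' _).sub (h.measurable' _)).exp)
    (fun k => h.integrable_exp_sub hq (pred_le k))
    (fun k => h.integral_exp_sub _ _ (pred_le k)) (fun k => ?_) (fun k ω => ?_)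
  · exact indep_of_indep_of_le_left (h.indep_incrementSigma (n.sub_le k)).symm
      (h.measurable_sub (pred_le k) le_rfl).exp.comap_le
  · rw [Pi.mul_apply, ← exp_add, sub_add_sub_cancel]

lemma submartingale_drawup (h : IsGeometricWalk q X ℱ P) (hq : 1 ≤ q) :
    Submartingale (drawup X) ℱ P :=
  submartingale_of_mul_le (Y := fun k ω => exp (X (k + 1) ω - X k ω))
    (fun _ => (measurable_drawup fun _ hi => h.measurable_sub hi le_rfl).stronglyMeasurable)
    (fun k => (h.memLp_drawup k).integrable (ENNReal.one_le_ofReal.2 hq))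
    (fun _ => ((h.measurable' _).sub (h.measurable' _)).exp)
    (fun k => h.integrable_exp_sub hq k.le_succ) (fun k => h.integral_exp_sub _ _ k.le_succ)
    (fun k => indep_of_indep_of_le_left (h.indep_succ k) (measurable_exp.comp
      (comap_measurable fun ω => X (k + 1) ω - X k ω)).comap_le)
    (drawup_mul_exp_sub_le X)

lemma integral_drawup_rpow_le (h : IsGeometricWalk q X ℱ P) (hq : 1 < q) (n : ℕ) :
    ∫ ω, drawup X n ω ^ q ∂P ≤ (q / (q - 1)) ^ q * ∫ ω, exp (X n ω - X 0 ω) ^ q ∂P := by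
  have reindex : partialSups (fun k ω => exp (X n ω - X (n - k) ω)) n = drawup X n :=
    partialSups_comp_sub (fun i ω => exp (X n ω - X i ω)) n
  simpa only [reindex, Nat.sub_self] using
    integral_partialSups_rpow_le hq (h.submartingale_exp_sub_reversed hq.le n)
      (fun _ _ => (exp_pos _).le) (fun k => h.memLp_exp_sub _ _ (n.sub_le k)) n

lemma integral_partialSups_drawup_rpow_le (h : IsGeometricWalk q X ℱ P) (hq : 1 < q) (n : ℕ) :
    ∫ ω, partialSups (drawup X) n ω ^ q ∂P ≤
      (q / (q - 1)) ^ q * ((q / (q - 1)) ^ q * ∫ ω, exp (X n ω - X 0 ω) ^ q ∂P) := by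
  have : 0 < q - 1 := by linarith
  calc ∫ ω, partialSups (drawup X) n ω ^ q ∂P
    _ ≤ (q / (q - 1)) ^ q * ∫ ω, drawup X n ω ^ q ∂P :=
      integral_partialSups_rpow_le hq (h.submartingale_drawup hq.le) (drawup_nonneg X)
        h.memLp_drawup n
    _ ≤ _ := by gcongr; exact h.integral_drawup_rpow_le hq n

lemma lintegral_partialSups_drawup_rpow_mul_le (h : IsGeometricWalk q X ℱ P) (hq : 1 < q) (n : ℕ)
    {v : Ω → ℝ≥0∞} (hv : Measurable[ℱ 0] v) :
    ∫⁻ ω, .ofReal (partialSups (drawup X) n ω ^ q) * v ω ∂P ≤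
      .ofReal ((q / (q - 1)) ^ q * ((q / (q - 1)) ^ q * ∫ ω, exp (X n ω - X 0 ω) ^ q ∂P)) *
        ∫⁻ ω, v ω ∂P := by
  have sup_nonneg : 0 ≤ partialSups (drawup X) n := (drawup_nonneg X n).trans (le_partialSups _ n)
  have sup_meas : Measurable[incrementSigma X 0 n] (partialSups (drawup X) n) :=
    measurable_partialSups fun k hk => measurable_drawup fun i hi =>
      measurable_sub_incrementSigma i.zero_le hi hk
  rw [lintegral_mul_eq_lintegral_mul_lintegral_of_independent_measurableSpace
    (incrementSigma_le h.measurable' 0 n) (ℱ.le 0) (h.indep_incrementSigma n.zero_le)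
    (sup_meas.pow_const q).ennreal_ofReal hv,
    ← ofReal_integral_eq_lintegral_ofReal (integrable_rpow_of_memLp (by linarith)
      (memLp_partialSups fun k _ => h.memLp_drawup k) sup_nonneg)
      (.of_forall fun ω => rpow_nonneg (sup_nonneg ω) q)]
  gcongr
  exact h.integral_partialSups_drawup_rpow_le hq n

end IsGeometricWalk

end GeometricWalk

/-! ### Sampling a geometric martingale -/

section GeometricMartingale

variable {Ω : Type*} {m0 : MeasurableSpace Ω} {P : Measure Ω}

lemma one_le_integral_exp_mul [IsProbabilityMeasure P] {V : Ω → ℝ} {q : ℝ} (hq : 1 ≤ q)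
    (hV : ∫ ω, exp (V ω) ∂P = 1) (hint : Integrable (fun ω => exp (q * V ω)) P) :
    1 ≤ ∫ ω, exp (q * V ω) ∂P := by
  have int_exp : Integrable (fun ω => exp (V ω)) P :=
    .of_integral_ne_zero (by rw [hV]; exact one_ne_zero)
  have int_sub : Integrable (fun ω => exp (V ω) - 1) P := int_exp.sub (integrable_const 1)
  calc (1 : ℝ) = ∫ ω, (1 + q * (exp (V ω) - 1)) ∂P := by
        rw [integral_add (integrable_const 1) (int_sub.const_mul q), integral_const_mul,
          integral_sub int_exp (integrable_const 1), hV]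
        simp
    _ ≤ ∫ ω, exp (q * V ω) ∂P :=
        integral_mono ((integrable_const 1).add (int_sub.const_mul q)) hint fun ω => by
          have bernoulli := one_add_mul_self_le_rpow_one_add (s := exp (V ω) - 1)
            (by linarith [exp_pos (V ω)]) hq
          rwa [add_sub_cancel, ← exp_mul, mul_comm (V ω)] at bernoulli

lemma integrable_exp_mul_of_indepFun_add [NeZero P] {U V : Ω → ℝ} {q : ℝ} (hU : Measurable U)
    (hV : Measurable V) (hUV : IndepFun U V P)
    (hint : Integrable (fun ω => exp (q * (U ω + V ω))) P) :
    Integrable (fun ω => exp (q * U ω)) P := by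
  have meas_exp : Measurable fun x => exp (q * x) := by fun_prop
  have exp_ne_zero : ¬(fun ω => exp (q * V ω)) =ᵐ[P] 0 := fun h =>
    let ⟨ω, hω⟩ := h.exists
    (exp_pos (q * V ω)).ne' hω
  exact (hUV.comp meas_exp meas_exp).integrable_left_of_integrable_op (· * ·) 1 one_ne_zero
    (fun x y => by simp [enorm_mul])
    (by simpa only [Function.comp_def, mul_add, exp_add] using hint)
    (meas_exp.comp hU).aestronglyMeasurable (meas_exp.comp hV).aestronglyMeasurable exp_ne_zero

lemma integral_exp_mul_le_of_indepFun_add [IsProbabilityMeasure P] {U V : Ω → ℝ} {q : ℝ}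
    (hq : 1 ≤ q) (hU : Measurable U) (hV : Measurable V) (hUV : IndepFun U V P)
    (hV1 : ∫ ω, exp (V ω) ∂P = 1)
    (hint : Integrable (fun ω => exp (q * (U ω + V ω))) P) :
    ∫ ω, exp (q * U ω) ∂P ≤ ∫ ω, exp (q * (U ω + V ω)) ∂P := by
  have hintV : Integrable (fun ω => exp (q * V ω)) P :=
    integrable_exp_mul_of_indepFun_add hV hU hUV.symm (by simpa only [add_comm] using hint)
  have meas_exp : Measurable fun x => exp (q * x) := by fun_prop
  calc ∫ ω, exp (q * U ω) ∂P
    _ ≤ (∫ ω, exp (q * U ω) ∂P) * ∫ ω, exp (q * V ω) ∂P :=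
      le_mul_of_one_le_right (integral_nonneg fun ω => (exp_pos _).le)
        (one_le_integral_exp_mul hq hV1 hintV)
    _ = ∫ ω, exp (q * (U ω + V ω)) ∂P := by
      simp only [mul_add, exp_add]
      exact ((hUV.comp meas_exp meas_exp).integral_fun_mul_eq_mul_integral
        (meas_exp.comp hU).aestronglyMeasurable (meas_exp.comp hV).aestronglyMeasurable).symm

/-- `X` starts at zero, has increments independent of the past of `ℱ`, and `exp X` is a martingale
on `[0, T]` with `exp (X T) ∈ L^q`. -/
structure IsGeometricMartingale (q T : ℝ) (X : ℝ → Ω → ℝ) (ℱ : Filtration ℝ m0) (P : Measure Ω) :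
    Prop where
  zero : ∀ ω, X 0 ω = 0
  measurable : ∀ t, Measurable[ℱ t] (X t)
  indep : ∀ s t : ℝ, 0 ≤ s → s ≤ t →
    Indep (MeasurableSpace.comap (fun ω => X t ω - X s ω) inferInstance) (ℱ s) P
  integrable : Integrable (fun ω => exp (q * X T ω)) P
  martingale : ∀ s t : ℝ, 0 ≤ s → s ≤ t → t ≤ T →
    (fun ω => exp (X s ω)) =ᵐ[P] P[(fun ω => exp (X t ω)) | ℱ s]

/-- The filtration seen through the sampling times `τ`. -/
def sampledFiltration (ℱ : Filtration ℝ m0) {τ : ℕ → ℝ} (hτ : Monotone τ) : Filtration ℕ m0 where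
  seq k := ℱ (τ k)
  mono' _ _ h := ℱ.mono (hτ h)
  le' k := ℱ.le (τ k)

namespace IsGeometricMartingale

variable {ℱ : Filtration ℝ m0} {X : ℝ → Ω → ℝ} {q T s t : ℝ}

lemma measurable' (h : IsGeometricMartingale q T X ℱ P) (t : ℝ) : Measurable (X t) :=
  (h.measurable t).mono (ℱ.le t) le_rfl

lemma measurable_sub (h : IsGeometricMartingale q T X ℱ P) (s t : ℝ) :
    Measurable fun ω => X t ω - X s ω :=
  (h.measurable' t).sub (h.measurable' s)

lemma indepFun_sub (h : IsGeometricMartingale q T X ℱ P) (hs : 0 ≤ s) (hst : s ≤ t) :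
    IndepFun (X s) (fun ω => X t ω - X s ω) P :=
  (IndepFun_iff_Indep _ _ _).2 <|
    indep_of_indep_of_le_left (h.indep s t hs hst).symm (h.measurable s).comap_le

variable [IsProbabilityMeasure P]

lemma integral_exp (h : IsGeometricMartingale q T X ℱ P) (ht : 0 ≤ t) (htT : t ≤ T) :
    ∫ ω, exp (X t ω) ∂P = 1 := by
  calc ∫ ω, exp (X t ω) ∂P = ∫ ω, exp (X 0 ω) ∂P := by
        rw [integral_congr_ae (h.martingale 0 t le_rfl ht htT), integral_condExp (ℱ.le 0)]
    _ = 1 := by simp [h.zero]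

lemma integral_exp_sub (h : IsGeometricMartingale q T X ℱ P) (hs : 0 ≤ s) (hst : s ≤ t)
    (htT : t ≤ T) : ∫ ω, exp (X t ω - X s ω) ∂P = 1 := by
  have factor := ((h.indepFun_sub hs hst).comp measurable_exp
    measurable_exp).integral_fun_mul_eq_mul_integral
      (h.measurable' s).exp.aestronglyMeasurable
      (h.measurable_sub s t).exp.aestronglyMeasurable
  simpa only [Function.comp_apply, ← exp_add, add_sub_cancel, h.integral_exp hs (hst.trans htT),
    h.integral_exp (hs.trans hst) htT, one_mul, eq_comm] using factor

lemma integrable_exp_mul (h : IsGeometricMartingale q T X ℱ P) (ht : 0 ≤ t) (htT : t ≤ T) :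
    Integrable (fun ω => exp (q * X t ω)) P :=
  integrable_exp_mul_of_indepFun_add (h.measurable' t) (h.measurable_sub t T)
    (h.indepFun_sub ht htT) (by simpa only [add_sub_cancel] using h.integrable)

lemma integrable_exp_mul_sub (h : IsGeometricMartingale q T X ℱ P) (hs : 0 ≤ s) (hst : s ≤ t)
    (htT : t ≤ T) : Integrable (fun ω => exp (q * (X t ω - X s ω))) P :=
  integrable_exp_mul_of_indepFun_add (h.measurable_sub s t) (h.measurable' s)
    (h.indepFun_sub hs hst).symm
    (by simpa only [sub_add_cancel] using h.integrable_exp_mul (hs.trans hst) htT)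

lemma integral_exp_mul_sub_le (h : IsGeometricMartingale q T X ℱ P) (hq : 1 ≤ q) (hs : 0 ≤ s)
    (hst : s ≤ t) (htT : t ≤ T) :
    ∫ ω, exp (q * (X t ω - X s ω)) ∂P ≤ ∫ ω, exp (q * X T ω) ∂P := by
  have ht : 0 ≤ t := hs.trans hst
  calc ∫ ω, exp (q * (X t ω - X s ω)) ∂P
    _ ≤ ∫ ω, exp (q * X t ω) ∂P := by
      simpa only [sub_add_cancel] using integral_exp_mul_le_of_indepFun_add hq
        (h.measurable_sub s t) (h.measurable' s) (h.indepFun_sub hs hst).symm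
        (h.integral_exp hs (hst.trans htT))
        (by simpa only [sub_add_cancel] using h.integrable_exp_mul ht htT)
    _ ≤ ∫ ω, exp (q * X T ω) ∂P := by
      simpa only [add_sub_cancel] using integral_exp_mul_le_of_indepFun_add hq
        (h.measurable' t) (h.measurable_sub t T) (h.indepFun_sub ht htT)
        (h.integral_exp_sub ht htT le_rfl) (by simpa only [add_sub_cancel] using h.integrable)

lemma isGeometricWalk (h : IsGeometricMartingale q T X ℱ P) (hq : 1 ≤ q) {τ : ℕ → ℝ}
    (hτ : Monotone τ) (hτ0 : ∀ k, 0 ≤ τ k) (hτT : ∀ k, τ k ≤ T) :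
    IsGeometricWalk q (fun k => X (τ k)) (sampledFiltration ℱ hτ) P where
  measurable k := h.measurable (τ k)
  indep_succ k := h.indep _ _ (hτ0 k) (hτ k.le_succ)
  integral_exp_sub i j hij := h.integral_exp_sub (hτ0 i) (hτ hij) (hτT j)
  memLp_exp_sub i j hij := by
    have hq0 : 0 < q := by linarith
    rw [← integrable_norm_rpow_iff (h.measurable_sub _ _).exp.aestronglyMeasurable
      (by simpa using hq0) ENNReal.ofReal_ne_top]
    simpa only [ENNReal.toReal_ofReal hq0.le, norm_eq_abs, abs_exp, ← exp_mul, mul_comm _ q] using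
      h.integrable_exp_mul_sub (hτ0 i) (hτ hij) (hτT j)

lemma lintegral_partialSups_drawup_rpow_mul_le (h : IsGeometricMartingale q T X ℱ P) (hq : 1 < q)
    {τ : ℕ → ℝ} (hτ : Monotone τ) (hτ0 : ∀ k, 0 ≤ τ k) (hτT : ∀ k, τ k ≤ T) (n : ℕ)
    {v : Ω → ℝ≥0∞} (hv : Measurable[ℱ (τ 0)] v) :
    ∫⁻ ω, .ofReal (partialSups (drawup fun k => X (τ k)) n ω ^ q) * v ω ∂P ≤
      .ofReal ((q / (q - 1)) ^ q * ((q / (q - 1)) ^ q * ∫ ω, exp (q * X T ω) ∂P)) *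
        ∫⁻ ω, v ω ∂P := by
  have : 0 < q - 1 := by linarith
  refine ((h.isGeometricWalk hq.le hτ hτ0 hτT).lintegral_partialSups_drawup_rpow_mul_le hq n
    hv).trans ?_
  gcongr ENNReal.ofReal (_ * (_ * ?_)) * _
  simpa only [← exp_mul, mul_comm _ q] using
    h.integral_exp_mul_sub_le hq.le (hτ0 0) (hτ n.zero_le) (hτT n)

end IsGeometricMartingale

end GeometricMartingale

/-! ### Grids and right-continuous paths -/

section Grid

variable {a b T x : ℝ}

/-- The multiples `k / n`, truncated to `[a, T]`. -/
noncomputable def grid (a T : ℝ) (n k : ℕ) : ℝ := max a (min T (k / n))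

lemma grid_mono (a T : ℝ) (n : ℕ) : Monotone (grid a T n) := fun i j hij => by
  unfold grid
  gcongr

lemma le_grid (a T : ℝ) (n k : ℕ) : a ≤ grid a T n k := le_max_left _ _

lemma grid_le (haT : a ≤ T) (n k : ℕ) : grid a T n k ≤ T := max_le haT (min_le_left _ _)

lemma grid_zero (ha : 0 ≤ a) (n : ℕ) : grid a T n 0 = a := by
  simp [grid, ha]

lemma tendsto_grid_ceil (ha : 0 ≤ a) (hx : x ∈ Set.Icc a T) :
    Tendsto (fun n : ℕ => grid a T n ⌈x * n⌉₊) atTop (𝓝[≥] x) := by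
  have tendsto_quot : Tendsto (fun n : ℕ => (⌈x * n⌉₊ : ℝ) / n) atTop (𝓝 x) :=
    (tendsto_nat_ceil_mul_div_atTop (ha.trans hx.1)).comp tendsto_natCast_atTop_atTop
  refine tendsto_nhdsWithin_of_tendsto_nhds_of_eventually_within _ ?_ ?_
  · have := (tendsto_const_nhds (x := a)).max ((tendsto_const_nhds (x := T)).min tendsto_quot)
    rwa [min_eq_right hx.2, max_eq_right hx.1] at this
  · filter_upwards [eventually_gt_atTop 0] with n hn
    have : x ≤ (⌈x * n⌉₊ : ℝ) / n := (le_div_iff₀ (by positivity)).2 (Nat.le_ceil _)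
    exact (le_min hx.2 this).trans (le_max_right _ _)

lemma iSup_eq_iSup_of_upperBounds_eq {ι κ : Type*} [Nonempty ι] [Nonempty κ] {f : ι → ℝ}
    {g : κ → ℝ} (h : upperBounds (Set.range f) = upperBounds (Set.range g)) :
    ⨆ i, f i = ⨆ j, g j := by
  by_cases hf : BddAbove (Set.range f)
  · have hg : BddAbove (Set.range g) := by rwa [BddAbove, ← h]
    exact ((isLUB_congr h).1 (isLUB_ciSup hf)).unique (isLUB_ciSup hg)
  · have hg : ¬BddAbove (Set.range g) := by rwa [BddAbove, ← h]
    rw [Real.iSup_of_not_bddAbove hf, Real.iSup_of_not_bddAbove hg]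

lemma iSup_Icc_eq_iSup_grid {g : ℝ → ℝ} (hg : ∀ t, ContinuousWithinAt g (Set.Ici t) t)
    (ha : 0 ≤ a) (hab : a ≤ b) :
    ⨆ s : Set.Icc a b, g s = ⨆ p : ℕ × ℕ, g (grid a b p.1 p.2) := by
  have : Nonempty (Set.Icc a b) := ⟨⟨a, le_rfl, hab⟩⟩
  refine iSup_eq_iSup_of_upperBounds_eq (Set.ext fun B => ?_)
  simp only [mem_upperBounds, Set.forall_mem_range]
  exact ⟨fun h p => h ⟨_, le_grid a b _ _, grid_le hab _ _⟩, fun h s =>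
    le_of_tendsto ((hg s).tendsto.comp (tendsto_grid_ceil ha s.2)) (.of_forall fun n => h (n, _))⟩

end Grid

section Path

variable {x : ℝ → ℝ} {η a t K : ℝ}

/-- The process `Φ(η) = S_t · sup_{s ≤ t} S_s^{η - 1}` along the path `S = exp x`; a supremum
that is not finite has the value zero. -/
noncomputable def weightedSup (η : ℝ) (x : ℝ → ℝ) (t : ℝ) : ℝ :=
  exp (η * x t) * ⨆ s : Set.Icc (0 : ℝ) t, exp ((1 - η) * (x t - x s))

lemma weightedSup_nonneg (η : ℝ) (x : ℝ → ℝ) (t : ℝ) : 0 ≤ weightedSup η x t :=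
  mul_nonneg (exp_pos _).le (iSup_nonneg fun _ => (exp_pos _).le)

lemma weightedSup_eq (η : ℝ) (x : ℝ → ℝ) (t : ℝ) :
    weightedSup η x t = exp (x t) * ⨆ s : Set.Icc (0 : ℝ) t, exp ((η - 1) * x s) := by
  rw [weightedSup, Real.mul_iSup_of_nonneg (exp_pos _).le, Real.mul_iSup_of_nonneg (exp_pos _).le]
  refine iSup_congr fun s => ?_
  rw [← exp_add, ← exp_add]
  ring_nf

lemma exp_mul_weights_le {u v : ℝ} (hη : η ∈ Set.Icc (0 : ℝ) 1) (hu : exp u ≤ K)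
    (hv : exp v ≤ K) : exp (η * u + (1 - η) * v) ≤ K := by
  have := convexOn_exp.2 (Set.mem_univ u) (Set.mem_univ v) hη.1 (sub_nonneg.2 hη.2) (by ring)
  simp only [smul_eq_mul] at this
  nlinarith [hη.1, hη.2]

lemma weightedSup_le_mul (hη : η ∈ Set.Icc (0 : ℝ) 1) (ha : 0 ≤ a) (hat : a ≤ t)
    (hK : ∀ s ∈ Set.Icc a t, exp (x t - x s) ≤ K) :
    weightedSup η x t ≤ K * weightedSup η x a := by
  have hK0 : 0 ≤ K := (exp_pos _).le.trans (hK a ⟨le_rfl, hat⟩)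
  set u : Set.Icc (0 : ℝ) t → ℝ := fun s => exp ((η - 1) * x s)
  by_cases hbdd : BddAbove (Set.range u)
  swap
  · rw [weightedSup_eq, Real.iSup_of_not_bddAbove hbdd, mul_zero]
    exact mul_nonneg hK0 (weightedSup_nonneg η x a)
  have hbdd_a : BddAbove (Set.range fun s : Set.Icc (0 : ℝ) a => exp ((η - 1) * x s)) :=
    hbdd.mono (by rintro _ ⟨s, rfl⟩; exact ⟨⟨s, s.2.1, s.2.2.trans hat⟩, rfl⟩)
  have le_weightedSup (s : ℝ) (hs : s ∈ Set.Icc 0 a) :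
      exp (x a + (η - 1) * x s) ≤ weightedSup η x a := by
    rw [weightedSup_eq, exp_add]
    gcongr
    exact le_ciSup hbdd_a ⟨s, hs⟩
  rw [weightedSup_eq, Real.mul_iSup_of_nonneg (exp_pos _).le]
  refine Real.iSup_le (fun ⟨s, hs⟩ => ?_) (mul_nonneg hK0 (weightedSup_nonneg η x a))
  rcases le_total s a with hsa | has
  · calc exp (x t) * exp ((η - 1) * x s) = exp (x t - x a) * exp (x a + (η - 1) * x s) := by
          rw [← exp_add, ← exp_add]; ring_nf
      _ ≤ K * weightedSup η x a :=
          mul_le_mul (hK a ⟨le_rfl, hat⟩) (le_weightedSup s ⟨hs.1, hsa⟩) (exp_pos _).le hK0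
  · calc exp (x t) * exp ((η - 1) * x s)
        = exp (η * (x t - x a) + (1 - η) * (x t - x s)) * exp (x a + (η - 1) * x a) := by
          rw [← exp_add, ← exp_add]; ring_nf
      _ ≤ K * weightedSup η x a :=
          mul_le_mul (exp_mul_weights_le hη (hK a ⟨le_rfl, hat⟩) (hK s ⟨has, hs.2⟩))
            (le_weightedSup a ⟨ha, le_rfl⟩) (exp_pos _).le hK0

end Path

/-! ### Conditional bounds through an independent factor -/

section CondExp

variable {Ω : Type*} {m m0 : MeasurableSpace Ω} {μ : Measure Ω} [IsFiniteMeasure μ] {f g : Ω → ℝ}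

lemma condExp_le_of_forall_setLIntegral_le (hm : m ≤ m0) (hf : 0 ≤ f) (hg : 0 ≤ g)
    (hgm : Measurable[m] g) (h : ∀ s, MeasurableSet[m] s →
      ∫⁻ ω in s, .ofReal (f ω) ∂μ ≤ ∫⁻ ω in s, .ofReal (g ω) ∂μ) : μ[f | m] ≤ᵐ[μ] g := by
  by_cases hfi : Integrable f μ
  swap
  · rw [condExp_of_not_integrable hfi]
    exact .of_forall hg
  have condExp_meas : Measurable[m] fun ω => ENNReal.ofReal (μ[f | m] ω) :=
    stronglyMeasurable_condExp.measurable.ennreal_ofReal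
  have le_trim : (fun ω => ENNReal.ofReal (μ[f | m] ω)) ≤ᵐ[μ.trim hm]
      fun ω => ENNReal.ofReal (g ω) := by
    refine ae_le_of_forall_setLIntegral_le_of_sigmaFinite condExp_meas fun s hs _ => ?_
    rw [restrict_trim hm μ hs, lintegral_trim hm condExp_meas, lintegral_trim hm hgm.ennreal_ofReal,
      ← ofReal_integral_eq_lintegral_ofReal integrable_condExp.integrableOn
        (ae_restrict_of_ae (condExp_nonneg (.of_forall hf))),
      setIntegral_condExp hm hfi hs,
      ofReal_integral_eq_lintegral_ofReal hfi.integrableOn (.of_forall hf)]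
    exact h s hs
  filter_upwards [ae_le_of_ae_le_trim le_trim] with ω hω
  exact (ENNReal.ofReal_le_ofReal_iff (hg ω)).1 hω

lemma condExp_le_mul_of_ofReal_le_mul {D : Ω → ℝ≥0∞} {C : ℝ} (hm : m ≤ m0) (hf : 0 ≤ f)
    (hg : 0 ≤ g) (hgm : Measurable[m] g) (hC : 0 ≤ C)
    (hD : ∀ v : Ω → ℝ≥0∞, Measurable[m] v → ∫⁻ ω, D ω * v ω ∂μ ≤ .ofReal C * ∫⁻ ω, v ω ∂μ)
    (hfD : ∀ᵐ ω ∂μ, .ofReal (f ω) ≤ D ω * .ofReal (g ω)) :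
    μ[f | m] ≤ᵐ[μ] fun ω => C * g ω := by
  refine condExp_le_of_forall_setLIntegral_le hm hf (fun ω => mul_nonneg hC (hg ω))
    (hgm.const_mul C) fun s hs => ?_
  simp only [ENNReal.ofReal_mul hC]
  set v : Ω → ℝ≥0∞ := fun ω => .ofReal (g ω)
  have v_meas : Measurable[m] v := hgm.ennreal_ofReal
  calc ∫⁻ ω in s, .ofReal (f ω) ∂μ
    _ ≤ ∫⁻ ω in s, D ω * v ω ∂μ := lintegral_mono_ae (ae_restrict_of_ae hfD)
    _ = ∫⁻ ω, D ω * s.indicator v ω ∂μ := by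
      simp only [← lintegral_indicator (hm s hs), Set.indicator_mul_right]
    _ ≤ .ofReal C * ∫⁻ ω, s.indicator v ω ∂μ := hD _ (v_meas.indicator hs)
    _ = ∫⁻ ω in s, .ofReal C * v ω ∂μ := by
      rw [lintegral_indicator (hm s hs), lintegral_const_mul _ (v_meas.mono hm le_rfl)]

end CondExp

/-! ### The maximal drawup in continuous time -/

section DrawupBound

variable {Ω : Type*} {m0 : MeasurableSpace Ω} {P : Measure Ω} {ℱ : Filtration ℝ m0}
  {X : ℝ → Ω → ℝ} {q T η a s t : ℝ} {ω : Ω}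

/-- An upper bound for `exp (X t - X s) ^ q` over `a ≤ s ≤ t ≤ T`, obtained from the maximal
drawups along the grids. Taking the limit inferior makes it measurable and fit for Fatou's lemma. -/
noncomputable def drawupBound (q a T : ℝ) (X : ℝ → Ω → ℝ) (ω : Ω) : ℝ≥0∞ :=
  liminf (fun n : ℕ =>
    ENNReal.ofReal (partialSups (drawup fun k => X (grid a T n k)) ⌈T * n⌉₊ ω ^ q)) atTop

lemma measurable_drawupBound (hX : ∀ t, Measurable (X t)) : Measurable (drawupBound q a T X) :=
  .liminf fun _ => ((measurable_partialSups fun _ _ => measurable_drawup fun _ _ =>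
    (hX _).sub (hX _)).pow_const q).ennreal_ofReal

lemma ofReal_exp_sub_rpow_le_drawupBound (hq : 0 ≤ q)
    (hrc : ∀ t, ContinuousWithinAt (X · ω) (Set.Ici t) t) (ha : 0 ≤ a) (has : a ≤ s)
    (hst : s ≤ t) (htT : t ≤ T) :
    ENNReal.ofReal (exp (X t ω - X s ω) ^ q) ≤ drawupBound q a T X ω := by
  have tendsto_X {r : ℝ} (hr : r ∈ Set.Icc a T) :
      Tendsto (fun n : ℕ => X (grid a T n ⌈r * n⌉₊) ω) atTop (𝓝 (X r ω)) :=
    (hrc r).tendsto.comp (tendsto_grid_ceil ha hr)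
  have tendsto_ratio := ENNReal.tendsto_ofReal <| ((continuous_exp.tendsto _).comp
    ((tendsto_X ⟨has.trans hst, htT⟩).sub (tendsto_X ⟨has, hst.trans htT⟩))).rpow_const (.inr hq)
  rw [← tendsto_ratio.liminf_eq]
  refine liminf_le_liminf (.of_forall fun n => ?_)
  have ceil_le : ⌈s * n⌉₊ ≤ ⌈t * n⌉₊ := by gcongr
  have ceil_le_last : ⌈t * n⌉₊ ≤ ⌈T * n⌉₊ := by gcongr
  refine ENNReal.ofReal_le_ofReal (rpow_le_rpow (exp_pos _).le ?_ hq)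
  exact (exp_sub_le_drawup (fun k => X (grid a T n k)) ceil_le ω).trans
    (le_partialSups_of_le (drawup fun k => X (grid a T n k)) ceil_le_last ω)

lemma measurable_weightedSup (hX : ∀ t, Measurable[ℱ t] (X t))
    (hrc : ∀ ω t, ContinuousWithinAt (X · ω) (Set.Ici t) t) (ha : 0 ≤ a) :
    Measurable[ℱ a] fun ω => weightedSup η (X · ω) a := by
  have sup_grid (ω) : ⨆ s : Set.Icc (0 : ℝ) a, exp ((η - 1) * X s ω) =
      ⨆ p : ℕ × ℕ, exp ((η - 1) * X (grid 0 a p.1 p.2) ω) :=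
    iSup_Icc_eq_iSup_grid (g := fun s => exp ((η - 1) * X s ω))
      (fun t => (continuousWithinAt_const.mul (hrc ω t)).rexp) le_rfl ha
  simp only [weightedSup_eq, sup_grid]
  exact (hX a).exp.mul <| .iSup fun p =>
    (((hX _).mono (ℱ.mono (grid_le ha _ _)) le_rfl).const_mul _).exp

lemma ofReal_iSup_weightedSup_rpow_le (hq : 0 < q) (hη : η ∈ Set.Icc (0 : ℝ) 1)
    (hrc : ∀ t, ContinuousWithinAt (X · ω) (Set.Ici t) t) (ha : 0 ≤ a)
    (hfin : drawupBound q a T X ω ≠ ∞) :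
    ENNReal.ofReal (⨆ t : Set.Icc a T, weightedSup η (X · ω) t ^ q) ≤
      drawupBound q a T X ω * ENNReal.ofReal (weightedSup η (X · ω) a ^ q) := by
  set D := (drawupBound q a T X ω).toReal
  have hD : 0 ≤ D := ENNReal.toReal_nonneg
  have hΦ (t) : 0 ≤ weightedSup η (X · ω) t := weightedSup_nonneg η _ t
  rw [← ENNReal.ofReal_toReal hfin, ← ENNReal.ofReal_mul hD]
  refine ENNReal.ofReal_le_ofReal
    (Real.iSup_le (fun ⟨t, hat, htT⟩ => ?_) (mul_nonneg hD (rpow_nonneg (hΦ a) q)))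
  have ratio_le (s) (hs : s ∈ Set.Icc a t) : exp (X t ω - X s ω) ≤ D ^ q⁻¹ := by
    rw [le_rpow_inv_iff_of_pos (exp_pos _).le hD hq]
    exact (ENNReal.ofReal_le_iff_le_toReal hfin).1
      (ofReal_exp_sub_rpow_le_drawupBound hq.le hrc ha hs.1 hs.2 htT)
  calc weightedSup η (X · ω) t ^ q
    _ ≤ (D ^ q⁻¹ * weightedSup η (X · ω) a) ^ q :=
      rpow_le_rpow (hΦ t) (weightedSup_le_mul hη ha hat ratio_le) hq.le
    _ = D * weightedSup η (X · ω) a ^ q := by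
      rw [mul_rpow (rpow_nonneg hD _) (hΦ a), rpow_inv_rpow hD hq.ne']

namespace IsGeometricMartingale

variable [IsProbabilityMeasure P]

lemma lintegral_drawupBound_mul_le (h : IsGeometricMartingale q T X ℱ P) (hq : 1 < q)
    (ha : 0 ≤ a) (haT : a ≤ T) {v : Ω → ℝ≥0∞} (hv : Measurable[ℱ a] v) :
    ∫⁻ ω, drawupBound q a T X ω * v ω ∂P ≤
      .ofReal ((q / (q - 1)) ^ q * ((q / (q - 1)) ^ q * ∫ ω, exp (q * X T ω) ∂P)) *
        ∫⁻ ω, v ω ∂P := by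
  set D : ℕ → Ω → ℝ≥0∞ := fun n ω =>
    .ofReal (partialSups (drawup fun k => X (grid a T n k)) ⌈T * n⌉₊ ω ^ q)
  have D_meas (n) : Measurable (D n) :=
    ((measurable_partialSups fun _ _ => measurable_drawup fun _ _ =>
      h.measurable_sub _ _).pow_const q).ennreal_ofReal
  calc ∫⁻ ω, drawupBound q a T X ω * v ω ∂P
    _ ≤ ∫⁻ ω, liminf (fun n => D n ω * v ω) atTop ∂P :=
      lintegral_mono fun ω => show liminf (D · ω) atTop * v ω ≤ _ by
        simpa only [liminf_const, Pi.mul_def] using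
          ENNReal.le_liminf_mul (f := atTop) (u := (D · ω)) (v := fun _ => v ω)
    _ ≤ liminf (fun n => ∫⁻ ω, D n ω * v ω ∂P) atTop :=
      lintegral_liminf_le fun n => (D_meas n).mul (hv.mono (ℱ.le a) le_rfl)
    _ ≤ _ := liminf_le_of_frequently_le' <| .of_forall fun n =>
      h.lintegral_partialSups_drawup_rpow_mul_le hq (grid_mono a T n)
        (fun k => ha.trans (le_grid a T n k)) (grid_le haT n) _ (by rwa [grid_zero ha])

lemma drawupBound_ae_ne_top (h : IsGeometricMartingale q T X ℱ P) (hq : 1 < q) (ha : 0 ≤ a)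
    (haT : a ≤ T) : ∀ᵐ ω ∂P, drawupBound q a T X ω ≠ ∞ := by
  have integral_bound := h.lintegral_drawupBound_mul_le hq ha haT (measurable_const (a := 1))
  simp only [mul_one, lintegral_one, measure_univ] at integral_bound
  filter_upwards [ae_lt_top (measurable_drawupBound h.measurable')
    (integral_bound.trans_lt ENNReal.ofReal_lt_top).ne] with ω hω using hω.ne

theorem condExp_iSup_weightedSup_rpow_le (h : IsGeometricMartingale q T X ℱ P) (hq : 1 < q)
    (hη : η ∈ Set.Icc (0 : ℝ) 1) (hrc : ∀ ω t, ContinuousWithinAt (X · ω) (Set.Ici t) t)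
    (ha : 0 ≤ a) (haT : a ≤ T) :
    P[fun ω => ⨆ t : Set.Icc a T, weightedSup η (X · ω) t ^ q | ℱ a] ≤ᵐ[P] fun ω =>
      (q / (q - 1)) ^ q * ((q / (q - 1)) ^ q * ∫ ω, exp (q * X T ω) ∂P) *
        weightedSup η (X · ω) a ^ q := by
  have : 0 < q - 1 := by linarith
  have hq0 : 0 < q := by linarith
  have hpow (t ω) : 0 ≤ weightedSup η (X · ω) t ^ q := rpow_nonneg (weightedSup_nonneg η _ t) q
  refine condExp_le_mul_of_ofReal_le_mul (D := drawupBound q a T X) (ℱ.le a)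
    (fun ω => iSup_nonneg fun t => hpow t ω) (hpow a)
    ((measurable_weightedSup h.measurable hrc ha).pow_const q)
    (by positivity)
    (fun v hv => h.lintegral_drawupBound_mul_le hq ha haT hv) ?_
  filter_upwards [h.drawupBound_ae_ne_top hq ha haT] with ω hω
  exact ofReal_iSup_weightedSup_rpow_le hq0 hη (hrc ω) ha hω

end IsGeometricMartingale

end DrawupBound

lemma smSet_mono {Ω : Type*} {m0 : MeasurableSpace Ω} {P : Measure Ω} {ℱ : ℝ → MeasurableSpace Ω}
    {T q c c' : ℝ} {Φ : ℝ → Ω → ℝ} (hq : 0 ≤ q) (hΦ : 0 ≤ Φ) (hc : c ∈ smSet P ℱ T q Φ)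
    (hcc' : c ≤ c') : c' ∈ smSet P ℱ T q Φ := by
  refine ⟨hc.1.trans hcc', fun a ha => ?_⟩
  filter_upwards [hc.2 a ha] with ω hω
  exact hω.trans (mul_le_mul_of_nonneg_right (rpow_le_rpow hc.1 hcc' hq)
    (rpow_nonneg (hΦ a ω) q))

theorem stmt_14_general {Ω : Type*} {m0 : MeasurableSpace Ω} (P : Measure Ω)
    [IsProbabilityMeasure P] (ℱ : Filtration ℝ m0) (T q η : ℝ) (hq : 1 < q)
    (hη : η ∈ Set.Icc (0 : ℝ) 1) (X : ℝ → Ω → ℝ) (hX0 : ∀ ω, X 0 ω = 0)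
    (hXad : ∀ t, Measurable[ℱ t] (X t))
    (hXrc : ∀ ω t, ContinuousWithinAt (fun s => X s ω) (Set.Ici t) t)
    (hindep : ∀ s t : ℝ, 0 ≤ s → s ≤ t →
      Indep (MeasurableSpace.comap (fun ω => X t ω - X s ω) inferInstance) (ℱ s) P)
    (hint : Integrable (fun ω => exp (q * X T ω)) P)
    (hmart : ∀ s t : ℝ, 0 ≤ s → s ≤ t → t ≤ T →
      (fun ω => exp (X s ω)) =ᵐ[P] P[(fun ω => exp (X t ω)) | ℱ s]) :
    (q / (q - 1)) ^ (2 : ℕ) * (∫ ω, exp (q * X T ω) ∂P) ^ (1 / q) ∈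
      smSet P ℱ T q fun t ω => weightedSup η (X · ω) t := by
  have h : IsGeometricMartingale q T X ℱ P := ⟨hX0, hXad, hindep, hint, hmart⟩
  have hq0 : 0 < q := by linarith
  have hc : 0 ≤ q / (q - 1) := div_nonneg hq0.le (by linarith)
  have hI : 0 ≤ ∫ ω, exp (q * X T ω) ∂P := by positivity
  have constant_rpow : ((q / (q - 1)) ^ (2 : ℕ) * (∫ ω, exp (q * X T ω) ∂P) ^ (1 / q)) ^ q =
      (q / (q - 1)) ^ q * ((q / (q - 1)) ^ q * ∫ ω, exp (q * X T ω) ∂P) := by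
    rw [sq, mul_assoc, mul_rpow hc (by positivity), mul_rpow hc (by positivity), one_div,
      rpow_inv_rpow hI hq0.ne']
  refine ⟨by positivity, fun a ha => ?_⟩
  rw [constant_rpow]
  exact h.condExp_iSup_weightedSup_rpow_le hq hη hXrc ha.1 ha.2

theorem stmt_14 {Ω : Type*} [m0 : MeasurableSpace Ω] (P : Measure Ω) [IsProbabilityMeasure P]
    (ℱ : ℝ → MeasurableSpace Ω) (hℱle : ∀ t, ℱ t ≤ m0) (hℱmono : Monotone ℱ)
    (T q η : ℝ) (hT : 0 < T) (hq : 1 < q) (hη : η ∈ Set.Icc (0 : ℝ) 1)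
    (X : ℝ → Ω → ℝ)
    (hX0 : ∀ ω, X 0 ω = 0)
    (hXad : ∀ t, Measurable[ℱ t] (X t))
    (hXrc : ∀ ω t, ContinuousWithinAt (fun s => X s ω) (Set.Ici t) t)
    (hindep : ∀ s t : ℝ, 0 ≤ s → s ≤ t →
      ProbabilityTheory.Indep
        (MeasurableSpace.comap (fun ω => X t ω - X s ω) inferInstance) (ℱ s) P)
    (hstat : ∀ s t : ℝ, 0 ≤ s → s ≤ t →
      Measure.map (fun ω => X t ω - X s ω) P = Measure.map (X (t - s)) P)
    -- `E e^{q X_T} < ∞`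
    (hint : Integrable (fun ω => Real.exp (q * X T ω)) P)
    -- `S = e^X` is a martingale
    (hmart : ∀ s t : ℝ, 0 ≤ s → s ≤ t → t ≤ T →
      (fun ω => Real.exp (X s ω)) =ᵐ[P] P[(fun ω => Real.exp (X t ω)) | ℱ s]) :
    -- `Φ(η) ∈ SM_q(P)` with the explicit constant
    2 ^ ((1 - η) / q) * (q / (q - 1)) ^ (2 : ℕ)
        * (∫ ω, Real.exp (q * X T ω) ∂P) ^ (1 / q)
      ∈ smSet P ℱ T q
        (fun t ω => Real.exp (η * X t ω) *
          ⨆ s : Set.Icc (0 : ℝ) t, Real.exp ((1 - η) * (X t ω - X s.1 ω))) := by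
  have hη1 : 0 ≤ 1 - η := sub_nonneg.2 hη.2
  refine smSet_mono (by linarith) (fun t ω => weightedSup_nonneg η (X · ω) t)
    (stmt_14_general P ⟨ℱ, hℱmono, hℱle⟩ T q η hq hη X hX0 hXad hXrc hindep hint hmart) ?_
  rw [mul_assoc]
  exact le_mul_of_one_le_left (by positivity) (one_le_rpow one_le_two (by positivity))
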